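/- Fix γ₀ ∈ ℝ, an integer ℓ ≥ 0, and set c₁ := (C₊+C₋)·cos(πY/2)·Γ(−Y) (so c₁ < 0) and c₂ := (C₋−C₊)·sin(πY/2)·Γ(−Y). Then, as h → 0 with ε = ε(h) → 0 and ε(h)/√h → ∞, for each choice of sign the (absolutely convergent) integral I(ℓ) := ∫_ℝ u^ℓ · exp( iu(ε ± γ₀h) − (1/2)σ²u²h + |u|^Y·h·(c₁ ∓ ic₂·sgn(u)) ) du satisfies I(ℓ) = O(h·ε^{−Y−ℓ−1}) + O(h^{−ℓ−1/2}·ε^{ℓ}·e^{−ε²/(2σ²h)}). -/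

import Mathlib

open MeasureTheory ProbabilityTheory Filter Asymptotics Set
open scoped Topology NNReal ENNReal Real

noncomputable section

/-!
Write the integrand as `G(u) * exp (h D(u))`, where `G(u) = u ^ ℓ exp (i a u - σ² h u² / 2)` with
`a = ε ± γ₀ h` is the Gaussian part and `D(u) = |u| ^ Y (c - d sgn u)`.

The integral of `G` alone is estimated by moving the contour to the horizontal line through the
saddle point `i a / (σ² h)`; this gives the exponentially small term.

In the integral of `G (exp (h D) - 1)`, `D` is holomorphic on each half-line separately. Rotating
each half-line by `π / 6` into the upper half-plane turns `exp (i a u)` into a factor bounded by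
`exp (-a |u| / 2)`. Since `Y < 2`, the Gaussian absorbs `exp (h |D|)`, so
`|e ^ w - 1| ≤ |w| e ^ |w|` leaves at most a constant times `h ∫ r ^ (ℓ + Y) exp (-a r / 2) dr`,
which is of order `h a ^ (-Y - ℓ - 1)`. Finally `a` is equivalent to `ε`, because
`h = o(√h) = o(ε)`.
-/

section ExpSubstitution

variable {E : Type*} [NormedAddCommGroup E] [NormedSpace ℝ E]

lemma integral_Ioi_eq_integral_exp_smul (f : ℝ → E) :
    ∫ r in Ioi 0, f r = ∫ x : ℝ, Real.exp x • f (Real.exp x) := by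
  simpa [Real.range_exp, abs_of_pos (Real.exp_pos _)] using
    integral_image_eq_integral_abs_deriv_smul MeasurableSet.univ
      (fun x _ => (Real.hasDerivAt_exp x).hasDerivWithinAt) Real.exp_injective.injOn f

lemma integrableOn_Ioi_iff_integrable_exp_smul (f : ℝ → E) :
    IntegrableOn f (Ioi 0) ↔ Integrable fun x : ℝ => Real.exp x • f (Real.exp x) := by
  simpa [Real.range_exp, abs_of_pos (Real.exp_pos _)] using
    integrableOn_image_iff_integrableOn_abs_deriv_smul MeasurableSet.univ
      (fun x _ => (Real.hasDerivAt_exp x).hasDerivWithinAt) Real.exp_injective.injOn f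

end ExpSubstitution

section ContourShift

variable {E : Type*} [NormedAddCommGroup E] [NormedSpace ℂ E] {θ : ℝ} {g : ℝ → ℝ}

lemma norm_intervalIntegral_sub_intervalIntegral_shift_le {H : ℂ → E}
    (hH : ∀ x : ℝ, ∀ y ∈ uIcc 0 θ, DifferentiableAt ℂ H (x + y * Complex.I))
    (hg : ∀ x : ℝ, ∀ y ∈ uIcc 0 θ, ‖H (x + y * Complex.I)‖ ≤ g x) (T : ℝ) :
    ‖(∫ x in -T..T, H x) - ∫ x in -T..T, H (x + θ * Complex.I)‖ ≤ |θ| * (g T + g (-T)) := by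
  have hvert (x : ℝ) : ‖∫ y in (0 : ℝ)..θ, H (x + y * Complex.I)‖ ≤ |θ| * g x := by
    simpa [mul_comm] using intervalIntegral.norm_integral_le_of_norm_le_const
      (fun y hy => hg x y (uIoc_subset_uIcc hy))
  have hrect := Complex.integral_boundary_rect_eq_zero_of_differentiableOn H (-T : ℝ)
    (T + θ * Complex.I) fun z hz => by
      have hz' : z.im ∈ uIcc 0 θ := by simpa using hz.2
      simpa only [Complex.re_add_im] using (hH z.re z.im hz').differentiableWithinAt
  simp only [Complex.ofReal_re, Complex.ofReal_im, Complex.add_re, Complex.add_im,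
    Complex.re_ofReal_mul, Complex.im_ofReal_mul, Complex.I_re, Complex.I_im, mul_zero, mul_one,
    add_zero, zero_add, Complex.ofReal_zero, zero_mul] at hrect
  have hsides : (∫ x in -T..T, H x) - ∫ x in -T..T, H (x + θ * Complex.I) =
      Complex.I • (∫ y in (0 : ℝ)..θ, H ((-T : ℝ) + y * Complex.I)) -
        Complex.I • ∫ y in (0 : ℝ)..θ, H (T + y * Complex.I) := by
    rw [← sub_eq_zero, ← hrect]
    abel
  rw [hsides]
  refine (norm_sub_le _ _).trans ?_
  rw [norm_smul, norm_smul, Complex.norm_I, one_mul, one_mul]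
  linarith [hvert T, hvert (-T)]

theorem integral_eq_integral_shift_of_norm_le {H : ℂ → E}
    (hH : ∀ x : ℝ, ∀ y ∈ uIcc 0 θ, DifferentiableAt ℂ H (x + y * Complex.I))
    (hg : ∀ x : ℝ, ∀ y ∈ uIcc 0 θ, ‖H (x + y * Complex.I)‖ ≤ g x) (hgi : Integrable g) :
    ∫ x : ℝ, H x = ∫ x : ℝ, H (x + θ * Complex.I) := by
  have h_int (y : ℝ) (hy : y ∈ uIcc 0 θ) : Integrable fun x : ℝ => H (x + y * Complex.I) := by
    refine hgi.mono' (Continuous.aestronglyMeasurable ?_) (ae_of_all _ fun x => hg x y hy)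
    exact continuous_iff_continuousAt.2 fun x => (hH x y hy).continuousAt.comp
      (f := fun x : ℝ => (x : ℂ) + y * Complex.I) (by fun_prop)
  have h0 : Integrable fun x : ℝ => H x := by simpa using h_int 0 left_mem_uIcc
  have hθ := h_int θ right_mem_uIcc
  let D (T : ℝ) : E := (∫ x in -T..T, H x) - ∫ x in -T..T, H (x + θ * Complex.I)
  have hlim : Tendsto D atTop (𝓝 ((∫ x : ℝ, H x) - ∫ x : ℝ, H (x + θ * Complex.I))) :=
    (intervalIntegral_tendsto_integral h0 tendsto_neg_atTop_atBot tendsto_id).sub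
      (intervalIntegral_tendsto_integral hθ tendsto_neg_atTop_atBot tendsto_id)
  have hcont : Continuous D := by
    have hprim {f : ℝ → E} (hf : Integrable f) : Continuous fun T : ℝ => ∫ x in -T..T, f x := by
      have h (a b : ℝ) : IntervalIntegrable f volume a b := hf.intervalIntegrable
      have := intervalIntegral.continuous_primitive h 0
      exact (this.sub (this.comp continuous_neg)).congr fun T =>
        intervalIntegral.integral_interval_sub_left (h _ _) (h _ _)
    exact (hprim h0).sub (hprim hθ)
  -- an integrable function with a limit at infinity can only tend to zero
  have hD : Integrable D := ((hgi.add hgi.comp_neg).const_mul |θ|).mono'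
    hcont.aestronglyMeasurable
    (ae_of_all _ (norm_intervalIntegral_sub_intervalIntegral_shift_le hH hg))
  refine sub_eq_zero.1 ((hD.integrableAtFilter atTop).eq_zero_of_tendsto (fun s hs => ?_) hlim)
  obtain ⟨b, hb⟩ := mem_atTop_sets.1 hs
  exact measure_mono_top hb Real.volume_Ici

/-- In the logarithmic coordinate `z = exp ζ` the two rays become the horizontal lines `im ζ = 0`
and `im ζ = θ`. -/
theorem integral_Ioi_eq_smul_integral_ray_of_norm_le {F : ℂ → E}
    (hF : ∀ r : ℝ, 0 < r → ∀ y ∈ uIcc 0 θ, DifferentiableAt ℂ F (r * Complex.exp (y * Complex.I)))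
    (hg : ∀ r : ℝ, 0 < r → ∀ y ∈ uIcc 0 θ, ‖F (r * Complex.exp (y * Complex.I))‖ ≤ g r)
    (hgi : IntegrableOn g (Ioi 0)) :
    ∫ r : ℝ in Ioi 0, F r =
      Complex.exp (θ * Complex.I) • ∫ r : ℝ in Ioi 0, F (r * Complex.exp (θ * Complex.I)) := by
  have hexp (x y : ℝ) : Complex.exp (x + y * Complex.I) =
      (Real.exp x : ℂ) * Complex.exp (y * Complex.I) := by
    rw [Complex.exp_add, Complex.ofReal_exp]
  have hshift := integral_eq_integral_shift_of_norm_le (θ := θ)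
    (H := fun ζ => Complex.exp ζ • F (Complex.exp ζ)) (g := fun x => Real.exp x * g (Real.exp x))
    (fun x y hy => by
      refine Complex.differentiableAt_exp.smul (DifferentiableAt.comp _ ?_
        Complex.differentiableAt_exp)
      rw [hexp]
      exact hF _ (Real.exp_pos x) y hy)
    (fun x y hy => by
      rw [norm_smul, hexp, norm_mul, Complex.norm_real, Complex.norm_exp_ofReal_mul_I, mul_one,
        Real.norm_of_nonneg (Real.exp_pos x).le]
      gcongr
      exact hg _ (Real.exp_pos x) y hy)
    ((integrableOn_Ioi_iff_integrable_exp_smul g).1 hgi)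
  rw [integral_Ioi_eq_integral_exp_smul, integral_Ioi_eq_integral_exp_smul, ← integral_smul]
  convert hshift using 3 with x
  · simp only [← Complex.ofReal_exp, Complex.coe_smul]
  · rw [hexp, mul_comm, mul_smul, Complex.coe_smul, smul_comm, mul_comm]

end ContourShift

lemma exists_mul_rpow_le_mul_rpow_add {p q B c : ℝ} (hp : 0 ≤ p) (hpq : p < q) (hB : 0 ≤ B)
    (hc : 0 < c) : ∃ K : ℝ, 0 ≤ K ∧ ∀ r : ℝ, 0 ≤ r → B * r ^ p ≤ c * r ^ q + K := by
  -- the radius beyond which the power `q` dominates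
  set R : ℝ := (B / c) ^ (q - p)⁻¹
  have hR : R ^ (q - p) = B / c := Real.rpow_inv_rpow (by positivity) (sub_pos.2 hpq).ne'
  refine ⟨B * R ^ p, by positivity, fun r hr => ?_⟩
  rcases le_total r R with hrR | hRr
  · have hle : B * r ^ p ≤ B * R ^ p := by gcongr
    linarith [mul_nonneg hc.le (Real.rpow_nonneg hr q)]
  · have hq : r ^ q = r ^ (q - p) * r ^ p := by
      rw [← Real.rpow_add_of_nonneg hr (sub_pos.2 hpq).le hp, sub_add_cancel]
    have hBr : B ≤ c * r ^ (q - p) := by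
      rw [← div_le_iff₀' hc, ← hR]
      exact Real.rpow_le_rpow (by positivity) hRr (sub_pos.2 hpq).le
    calc B * r ^ p ≤ c * r ^ (q - p) * r ^ p := by gcongr
      _ = c * r ^ q := by rw [hq, mul_assoc]
      _ ≤ c * r ^ q + B * R ^ p := by linarith [show 0 ≤ B * R ^ p by positivity]

lemma integrable_abs_add_pow_mul_exp_neg_mul_sq {b α : ℝ} (hb : 0 < b) (hα : 0 ≤ α) (n : ℕ) :
    Integrable fun x : ℝ => (|x| + α) ^ n * Real.exp (-b * x ^ 2) := by
  have hpow : Integrable fun x : ℝ => |x| ^ n * Real.exp (-b * x ^ 2) := by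
    have hn : (-1 : ℝ) < n := by linarith [n.cast_nonneg (α := ℝ)]
    simpa using (integrable_rpow_mul_exp_neg_mul_sq hb hn).norm
  refine ((hpow.add ((integrable_exp_neg_mul_sq hb).const_mul (α ^ n))).const_mul
    (2 ^ (n - 1))).mono' (Continuous.aestronglyMeasurable (by fun_prop)) (ae_of_all _ fun x => ?_)
  rw [Real.norm_of_nonneg (by positivity), Pi.add_apply, ← add_mul, ← mul_assoc]
  gcongr
  exact add_pow_le (abs_nonneg x) hα n

lemma norm_exp_sub_one_le_norm_mul_exp_norm (w : ℂ) :
    ‖Complex.exp w - 1‖ ≤ ‖w‖ * Real.exp ‖w‖ := by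
  simpa using Complex.norm_exp_sub_sum_le_norm_mul_exp w 1

lemma sq_div_two_le_mul_cos_sq_sub_mul_sin_sq (r : ℝ) {y : ℝ} (hy : |y| ≤ π / 6) :
    r ^ 2 / 2 ≤ (r * Real.cos y) ^ 2 - (r * Real.sin y) ^ 2 := by
  have hcos : 1 / 2 ≤ Real.cos (2 * y) := by
    rw [← Real.cos_pi_div_three, ← Real.cos_abs (2 * y), abs_mul, abs_two]
    exact Real.cos_le_cos_of_nonneg_of_le_pi (by positivity) (by linarith [Real.pi_pos])
      (by linarith)
  calc r ^ 2 / 2 = r ^ 2 * (1 / 2) := by ring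
    _ ≤ r ^ 2 * Real.cos (2 * y) := by gcongr
    _ = (r * Real.cos y) ^ 2 - (r * Real.sin y) ^ 2 := by rw [Real.cos_two_mul']; ring

lemma measurable_real_sign : Measurable Real.sign :=
  Measurable.ite measurableSet_Iio measurable_const
    (Measurable.ite measurableSet_Ioi measurable_const measurable_const)

section GaussianWave

/-- The Gaussian wave packet `z ^ ℓ * exp (i a z - b z² / 2)`, the unperturbed part of the
oscillatory integrand. It is defined on `ℂ` so that contours can be moved off the real line. -/
def gaussianWave (ℓ : ℕ) (a b : ℝ) (z : ℂ) : ℂ :=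
  z ^ ℓ * Complex.exp (Complex.I * a * z - b * z ^ 2 / 2)

variable {ℓ : ℕ} {a b : ℝ}

lemma differentiable_gaussianWave : Differentiable ℂ (gaussianWave ℓ a b) := by
  unfold gaussianWave
  fun_prop

lemma norm_gaussianWave (z : ℂ) :
    ‖gaussianWave ℓ a b z‖ =
      ‖z‖ ^ ℓ * Real.exp (-(a * z.im) - b / 2 * (z.re ^ 2 - z.im ^ 2)) := by
  rw [gaussianWave, norm_mul, norm_pow, Complex.norm_exp]
  congr 2
  simp only [pow_two, mul_div_right_comm, Complex.sub_re, Complex.mul_re, Complex.mul_im,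
    Complex.I_re, Complex.I_im, Complex.ofReal_re, Complex.ofReal_im, Complex.div_ofNat_re,
    Complex.div_ofNat_im]
  ring

lemma norm_gaussianWave_ofReal (u : ℝ) :
    ‖gaussianWave ℓ a b u‖ = |u| ^ ℓ * Real.exp (-(b / 2) * u ^ 2) := by
  simp [norm_gaussianWave]

lemma gaussianWave_neg_ofReal (u : ℝ) :
    gaussianWave ℓ a b (-u) = (-1) ^ ℓ * (starRingEnd ℂ) (gaussianWave ℓ a b u) := by
  simp only [gaussianWave, map_mul, map_pow, map_sub, map_div₀, ← Complex.exp_conj,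
    Complex.conj_ofReal, Complex.conj_I, Complex.conj_ofNat]
  rw [← mul_assoc, ← mul_pow]
  ring_nf

lemma integrable_gaussianWave (hb : 0 < b) : Integrable fun u : ℝ => gaussianWave ℓ a b u := by
  refine ((integrable_abs_add_pow_mul_exp_neg_mul_sq (half_pos hb) le_rfl ℓ).mono' ?_
    (ae_of_all _ fun u => ?_))
  · exact (differentiable_gaussianWave.continuous.comp
      Complex.continuous_ofReal).aestronglyMeasurable
  · rw [norm_gaussianWave_ofReal, add_zero]

/-- The saddle point of the exponent `i a z - b z² / 2` is `z = i a / b`; moving the contour to the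
horizontal line through it extracts the factor `exp (-a² / (2 b))`. -/
lemma norm_integral_gaussianWave_le_mul_integral (ha : 0 ≤ a) (hb : 0 < b) :
    ‖∫ u : ℝ, gaussianWave ℓ a b u‖ ≤ Real.exp (-a ^ 2 / (2 * b)) *
      ∫ x : ℝ, (|x| + a / b) ^ ℓ * Real.exp (-(b / 2) * x ^ 2) := by
  have hα : 0 ≤ a / b := by positivity
  have h_int := integrable_abs_add_pow_mul_exp_neg_mul_sq (half_pos hb) hα ℓ
  have hnorm (x y : ℝ) (hy : y ∈ uIcc 0 (a / b)) : ‖gaussianWave ℓ a b (x + y * Complex.I)‖ ≤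
      Real.exp (-(a * y) + b / 2 * y ^ 2) *
        ((|x| + a / b) ^ ℓ * Real.exp (-(b / 2) * x ^ 2)) := by
    rw [uIcc_of_le hα] at hy
    have hz : ‖(x + y * Complex.I : ℂ)‖ ≤ |x| + a / b := by
      refine (norm_add_le _ _).trans ?_
      simpa [abs_of_nonneg hy.1] using hy.2
    rw [norm_gaussianWave, mul_left_comm, ← Real.exp_add]
    gcongr
    exact le_of_eq (by simp; ring)
  rw [integral_eq_integral_shift_of_norm_le (θ := a / b)
    (fun x y _ => differentiable_gaussianWave _) (fun x y hy => (hnorm x y hy).trans ?_) h_int,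
    ← integral_const_mul]
  · refine norm_integral_le_of_norm_le (h_int.const_mul _) (ae_of_all _ fun x => ?_)
    convert hnorm x (a / b) right_mem_uIcc using 3
    field_simp
    ring
  · rw [uIcc_of_le hα] at hy
    have hby : b * y ≤ a := (le_div_iff₀' hb).1 hy.2
    refine mul_le_of_le_one_left (by positivity) (Real.exp_le_one_iff.2 ?_)
    nlinarith [hy.1, mul_nonneg ha hy.1]

lemma integral_abs_add_pow_mul_exp_le (ha : 0 ≤ a) (hb : 0 < b) (hab : b ≤ a ^ 2) :
    ∫ x : ℝ, (|x| + a / b) ^ ℓ * Real.exp (-(b / 2) * x ^ 2) ≤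
      (a / b) ^ ℓ * ((√b)⁻¹ * ∫ x : ℝ, (|x| + 1) ^ ℓ * Real.exp (-(1 / 2) * x ^ 2)) := by
  have hsqrt : 0 < √b := Real.sqrt_pos.2 hb
  have hα : 0 ≤ a / b := by positivity
  have hone : 1 ≤ a / b * √b := by
    rw [div_mul_eq_mul_div, one_le_div hb]
    nlinarith [Real.mul_self_sqrt hb.le, Real.sqrt_le_iff.2 ⟨ha, hab⟩]
  have hscale := Measure.integral_comp_mul_left
    (fun x : ℝ => (|x| + 1) ^ ℓ * Real.exp (-(1 / 2) * x ^ 2)) √b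
  rw [abs_of_pos (inv_pos.2 hsqrt), smul_eq_mul] at hscale
  rw [← hscale, ← integral_const_mul]
  refine integral_mono (integrable_abs_add_pow_mul_exp_neg_mul_sq (half_pos hb) hα ℓ)
    (((integrable_abs_add_pow_mul_exp_neg_mul_sq one_half_pos zero_le_one ℓ).comp_mul_left'
      hsqrt.ne').const_mul _) fun x => ?_
  have hbase : |x| + a / b ≤ a / b * (|√b * x| + 1) := by
    rw [abs_mul, abs_of_pos hsqrt]
    nlinarith [mul_le_mul_of_nonneg_right hone (abs_nonneg x)]
  have hexp : -(b / 2) * x ^ 2 = -(1 / 2) * (√b * x) ^ 2 := by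
    rw [mul_pow, Real.sq_sqrt hb.le]
    ring
  rw [← mul_assoc, ← mul_pow, hexp]
  gcongr

theorem exists_norm_integral_gaussianWave_le (ℓ : ℕ) :
    ∃ C : ℝ, ∀ a b : ℝ, 0 ≤ a → 0 < b → b ≤ a ^ 2 →
      ‖∫ u : ℝ, gaussianWave ℓ a b u‖ ≤
        C * ((a / b) ^ ℓ * (√b)⁻¹ * Real.exp (-a ^ 2 / (2 * b))) := by
  refine ⟨∫ x : ℝ, (|x| + 1) ^ ℓ * Real.exp (-(1 / 2) * x ^ 2), fun a b ha hb hab => ?_⟩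
  refine (norm_integral_gaussianWave_le_mul_integral ha hb).trans ?_
  refine (mul_le_mul_of_nonneg_left (integral_abs_add_pow_mul_exp_le ha hb hab)
    (Real.exp_pos _).le).trans (le_of_eq ?_)
  ring

end GaussianWave

section StablePerturbation

/-- The exponent `|u| ^ Y * (c - d * sgn u)`, which up to the factor `h` is what a `Y`-stable jump
component adds to the Gaussian exponent. The coefficients are complex so that the class is closed
under scaling, reflection and conjugation. -/
def stableExponent (Y : ℝ) (c d : ℂ) (u : ℝ) : ℂ :=
  (|u| ^ Y : ℝ) * (c - d * Real.sign u)

variable {Y : ℝ} {c d : ℂ}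

lemma measurable_stableExponent : Measurable (stableExponent Y c d) :=
  (Complex.measurable_ofReal.comp (measurable_id.abs.pow_const Y)).mul
    (((Complex.measurable_ofReal.comp measurable_real_sign).const_mul d).const_sub c)

lemma norm_stableExponent_le (u : ℝ) :
    ‖stableExponent Y c d u‖ ≤ (‖c‖ + ‖d‖) * |u| ^ Y := by
  have hsign : |Real.sign u| ≤ 1 := by
    rcases Real.sign_apply_eq u with h | h | h <;> simp [h]
  rw [stableExponent, norm_mul, Complex.norm_real, Real.norm_of_nonneg (by positivity), mul_comm]
  gcongr
  refine (norm_sub_le _ _).trans ?_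
  rw [norm_mul, Complex.norm_real, Real.norm_eq_abs]
  gcongr
  exact mul_le_of_le_one_right (norm_nonneg d) hsign

lemma stableExponent_of_pos {u : ℝ} (hu : 0 < u) :
    stableExponent Y c d u = (c - d) * (u : ℂ) ^ (Y : ℂ) := by
  rw [stableExponent, Real.sign_of_pos hu, abs_of_pos hu, Complex.ofReal_cpow hu.le]
  push_cast
  ring

lemma stableExponent_neg (u : ℝ) : stableExponent Y c d (-u) = stableExponent Y c (-d) u := by
  simp [stableExponent, Real.sign_neg]

lemma conj_stableExponent (u : ℝ) :
    (starRingEnd ℂ) (stableExponent Y c d u) =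
      stableExponent Y ((starRingEnd ℂ) c) ((starRingEnd ℂ) d) u := by
  simp [stableExponent]

lemma ofReal_mul_stableExponent (h u : ℝ) :
    h * stableExponent Y c d u = stableExponent Y (h * c) (h * d) u := by
  simp only [stableExponent]
  ring

variable {ℓ : ℕ} {a b : ℝ}

lemma integrable_gaussianWave_mul_exp_stableExponent (hY0 : 0 ≤ Y) (hY2 : Y < 2) (hb : 0 < b) :
    Integrable fun u : ℝ => gaussianWave ℓ a b u * Complex.exp (stableExponent Y c d u) := by
  obtain ⟨K, -, hK⟩ := exists_mul_rpow_le_mul_rpow_add hY0 hY2 (B := ‖c‖ + ‖d‖) (by positivity)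
    (show 0 < b / 4 by positivity)
  refine ((integrable_abs_add_pow_mul_exp_neg_mul_sq (show 0 < b / 4 by positivity) le_rfl
    ℓ).const_mul (Real.exp K)).mono' ((integrable_gaussianWave hb).1.mul
      measurable_stableExponent.cexp.aestronglyMeasurable) (ae_of_all _ fun u => ?_)
  have hre : (stableExponent Y c d u).re ≤ b / 4 * u ^ 2 + K := by
    have := hK |u| (abs_nonneg u)
    rw [Real.rpow_two, sq_abs] at this
    exact (Complex.re_le_norm _).trans ((norm_stableExponent_le u).trans this)
  rw [norm_mul, norm_gaussianWave_ofReal, Complex.norm_exp, add_zero, mul_assoc, ← Real.exp_add,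
    mul_left_comm, ← Real.exp_add]
  gcongr |u| ^ ℓ * Real.exp ?_
  linarith

variable {q : ℂ} {K : ℝ}

/-- On the sector `0 ≤ arg z ≤ π / 6` one has `re z² ≥ |z|² / 2`, so half of the Gaussian decay
survives, and the hypothesis on `q` spends half of what is left on `exp (q z ^ Y)`. -/
lemma norm_gaussianWave_mul_exp_cpow_sub_one_le (hb : 0 < b) {r y : ℝ} (hr : 0 < r)
    (hy : y ∈ Icc 0 (π / 6)) (hq : ‖q‖ * r ^ Y ≤ b / 8 * r ^ 2 + K) :
    ‖gaussianWave ℓ a b (r * Complex.exp (y * Complex.I)) *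
        (Complex.exp (q * (r * Complex.exp (y * Complex.I)) ^ (Y : ℂ)) - 1)‖ ≤
      Real.exp K * ‖q‖ * (r ^ (ℓ + Y) * Real.exp (-(a * (r * Real.sin y)) - b / 8 * r ^ 2)) := by
  set z : ℂ := r * Complex.exp (y * Complex.I) with hz
  have hnorm : ‖z‖ = r := by
    rw [hz, norm_mul, Complex.norm_exp_ofReal_mul_I, mul_one, Complex.norm_of_nonneg hr.le]
  have him : z.im = r * Real.sin y := by
    rw [hz, Complex.im_ofReal_mul, Complex.exp_ofReal_mul_I_im]
  have hsq : r ^ 2 / 2 ≤ z.re ^ 2 - (r * Real.sin y) ^ 2 := by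
    rw [hz, Complex.re_ofReal_mul, Complex.exp_ofReal_mul_I_re]
    exact sq_div_two_le_mul_cos_sq_sub_mul_sin_sq r (abs_le.2 ⟨by linarith [hy.1, hy.2], hy.2⟩)
  have hw : ‖q * z ^ (Y : ℂ)‖ = ‖q‖ * r ^ Y := by rw [norm_mul, Complex.norm_cpow_real, hnorm]
  have hexp : ‖Complex.exp (q * z ^ (Y : ℂ)) - 1‖ ≤
      ‖q‖ * r ^ Y * Real.exp (b / 8 * r ^ 2 + K) := by
    refine (norm_exp_sub_one_le_norm_mul_exp_norm _).trans ?_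
    rw [hw]
    gcongr
  rw [norm_mul, norm_gaussianWave, hnorm, him]
  calc r ^ ℓ * Real.exp (-(a * (r * Real.sin y)) - b / 2 * (z.re ^ 2 - (r * Real.sin y) ^ 2)) *
        ‖Complex.exp (q * z ^ (Y : ℂ)) - 1‖
      ≤ r ^ ℓ * Real.exp (-(a * (r * Real.sin y)) - b / 2 * (r ^ 2 / 2)) *
        (‖q‖ * r ^ Y * Real.exp (b / 8 * r ^ 2 + K)) := by gcongr
    _ = ‖q‖ * (r ^ ℓ * r ^ Y) * (Real.exp (-(a * (r * Real.sin y)) - b / 2 * (r ^ 2 / 2)) *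
        Real.exp (b / 8 * r ^ 2 + K)) := by ring
    _ = Real.exp K * ‖q‖ *
        (r ^ (ℓ + Y) * Real.exp (-(a * (r * Real.sin y)) - b / 8 * r ^ 2)) := by
      rw [← Real.exp_add, show -(a * (r * Real.sin y)) - b / 2 * (r ^ 2 / 2) +
        (b / 8 * r ^ 2 + K) = K + (-(a * (r * Real.sin y)) - b / 8 * r ^ 2) by ring, Real.exp_add,
        Real.rpow_add hr, Real.rpow_natCast]
      ring

lemma differentiableAt_gaussianWave_mul_exp_cpow_sub_one {z : ℂ} (hz : z ∈ Complex.slitPlane) :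
    DifferentiableAt ℂ
      (fun z => gaussianWave ℓ a b z * (Complex.exp (q * z ^ (Y : ℂ)) - 1)) z :=
  (differentiable_gaussianWave z).mul
    (((differentiableAt_id.cpow_const hz).const_mul q).cexp.sub_const 1)

lemma norm_integral_Ioi_gaussianWave_mul_exp_cpow_sub_one_le (hY : -1 < Y) (ha : 0 < a)
    (hb : 0 < b) (hq : ∀ r : ℝ, 0 ≤ r → ‖q‖ * r ^ Y ≤ b / 8 * r ^ 2 + K) :
    ‖∫ r : ℝ in Ioi 0, gaussianWave ℓ a b r * (Complex.exp (q * (r : ℂ) ^ (Y : ℂ)) - 1)‖ ≤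
      Real.exp K * ‖q‖ * (Real.Gamma (ℓ + Y + 1) * (2 / a) ^ (ℓ + Y + 1)) := by
  have hπ : (0 : ℝ) ≤ π / 6 := by positivity
  have hℓY : -1 < ℓ + Y := by linarith [ℓ.cast_nonneg (α := ℝ)]
  have hslit (r : ℝ) (hr : 0 < r) (y : ℝ) (hy : y ∈ Icc 0 (π / 6)) :
      (r * Complex.exp (y * Complex.I) : ℂ) ∈ Complex.slitPlane := by
    refine Or.inl ?_
    rw [Complex.re_ofReal_mul, Complex.exp_ofReal_mul_I_re]
    exact mul_pos hr (Real.cos_pos_of_mem_Ioo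
      ⟨by linarith [hy.1, Real.pi_pos], by linarith [hy.2, Real.pi_pos]⟩)
  have hgauss : IntegrableOn (fun r => Real.exp K * ‖q‖ * (r ^ (ℓ + Y) *
      Real.exp (-(b / 8) * r ^ (2 : ℝ)))) (Ioi 0) :=
    (integrableOn_rpow_mul_exp_neg_mul_rpow hℓY two_pos (by positivity)).const_mul _
  have hlaplace : IntegrableOn (fun r => Real.exp K * ‖q‖ * (r ^ (ℓ + Y) *
      Real.exp (-(a / 2 * r)))) (Ioi 0) := by
    have := integrableOn_rpow_mul_exp_neg_mul_rpow hℓY one_pos (show 0 < a / 2 by positivity)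
    simp only [Real.rpow_one, neg_mul] at this
    exact this.const_mul _
  have hΓ := Real.integral_rpow_mul_exp_neg_mul_Ioi (a := ℓ + Y + 1) (r := a / 2)
    (by linarith) (by positivity)
  rw [one_div_div, add_sub_cancel_right, mul_comm] at hΓ
  rw [integral_Ioi_eq_smul_integral_ray_of_norm_le (θ := π / 6) (fun r hr y hy =>
      differentiableAt_gaussianWave_mul_exp_cpow_sub_one (hslit r hr y (uIcc_of_le hπ ▸ hy)))
    (fun r hr y hy => ?_) hgauss, norm_smul, Complex.norm_exp_ofReal_mul_I, one_mul, ← hΓ,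
    ← integral_const_mul]
  · refine norm_integral_le_of_norm_le hlaplace
      (ae_restrict_of_forall_mem measurableSet_Ioi fun r (hr : 0 < r) => ?_)
    refine (norm_gaussianWave_mul_exp_cpow_sub_one_le hb hr ⟨hπ, le_rfl⟩ (hq r hr.le)).trans ?_
    rw [Real.sin_pi_div_six]
    gcongr
    linarith [show 0 ≤ b / 8 * r ^ 2 by positivity]
  · rw [uIcc_of_le hπ] at hy
    refine (norm_gaussianWave_mul_exp_cpow_sub_one_le hb hr hy (hq r hr.le)).trans ?_
    rw [Real.rpow_two, neg_mul]
    have hsin : 0 ≤ Real.sin y :=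
      Real.sin_nonneg_of_nonneg_of_le_pi hy.1 (by linarith [hy.2, Real.pi_pos])
    gcongr
    linarith [show 0 ≤ a * (r * Real.sin y) by positivity]

/-- The coefficients on the right are those of the conjugate of `u ↦ stableExponent Y c d (-u)`. -/
lemma integral_Iic_gaussianWave_mul_exp_stableExponent_sub_one :
    ∫ u : ℝ in Iic 0, gaussianWave ℓ a b u * (Complex.exp (stableExponent Y c d u) - 1) =
      (-1) ^ ℓ * (starRingEnd ℂ) (∫ u : ℝ in Ioi 0, gaussianWave ℓ a b u *
        (Complex.exp (stableExponent Y ((starRingEnd ℂ) c) (-(starRingEnd ℂ) d) u) - 1)) := by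
  rw [← integral_conj, ← integral_const_mul]
  conv_lhs => rw [← neg_zero, ← integral_comp_neg_Ioi]
  congr with u
  simp only [Complex.ofReal_neg, gaussianWave_neg_ofReal, stableExponent_neg, map_mul, map_sub,
    map_one, ← Complex.exp_conj, conj_stableExponent, map_neg, Complex.conj_conj, mul_assoc]

lemma norm_integral_Ioi_gaussianWave_mul_exp_stableExponent_sub_one_le (hY : -1 < Y) (ha : 0 < a)
    (hb : 0 < b) (hK : ∀ r : ℝ, 0 ≤ r → (‖c‖ + ‖d‖) * r ^ Y ≤ b / 8 * r ^ 2 + K) :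
    ‖∫ u : ℝ in Ioi 0, gaussianWave ℓ a b u * (Complex.exp (stableExponent Y c d u) - 1)‖ ≤
      Real.exp K * (‖c‖ + ‖d‖) * (Real.Gamma (ℓ + Y + 1) * (2 / a) ^ (ℓ + Y + 1)) := by
  have hΓ : 0 ≤ Real.Gamma (ℓ + Y + 1) :=
    Real.Gamma_nonneg_of_nonneg (by linarith [ℓ.cast_nonneg (α := ℝ)])
  rw [setIntegral_congr_fun measurableSet_Ioi fun u (hu : 0 < u) => by
    rw [stableExponent_of_pos hu]]
  refine (norm_integral_Ioi_gaussianWave_mul_exp_cpow_sub_one_le (K := K) hY ha hb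
    fun r hr => ?_).trans ?_
  · exact (mul_le_mul_of_nonneg_right (norm_sub_le c d) (by positivity)).trans (hK r hr)
  · gcongr
    exact norm_sub_le c d

lemma norm_integral_gaussianWave_mul_exp_stableExponent_sub_one_le (hY0 : 0 ≤ Y) (hY2 : Y < 2)
    (ha : 0 < a) (hb : 0 < b)
    (hK : ∀ r : ℝ, 0 ≤ r → (‖c‖ + ‖d‖) * r ^ Y ≤ b / 8 * r ^ 2 + K) :
    ‖∫ u : ℝ, gaussianWave ℓ a b u * (Complex.exp (stableExponent Y c d u) - 1)‖ ≤
      2 * (Real.exp K * (‖c‖ + ‖d‖) * (Real.Gamma (ℓ + Y + 1) * (2 / a) ^ (ℓ + Y + 1))) := by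
  have hY : -1 < Y := by linarith
  have h_int : Integrable fun u : ℝ =>
      gaussianWave ℓ a b u * (Complex.exp (stableExponent Y c d u) - 1) := by
    simp only [mul_sub_one]
    exact (integrable_gaussianWave_mul_exp_stableExponent hY0 hY2 hb).sub
      (integrable_gaussianWave hb)
  rw [← intervalIntegral.integral_Iic_add_Ioi h_int.integrableOn h_int.integrableOn, two_mul,
    integral_Iic_gaussianWave_mul_exp_stableExponent_sub_one]
  refine norm_add_le_of_le ?_
    (norm_integral_Ioi_gaussianWave_mul_exp_stableExponent_sub_one_le hY ha hb hK)
  rw [norm_mul, norm_pow, norm_neg, norm_one, one_pow, one_mul, Complex.norm_conj]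
  simpa only [norm_neg, Complex.norm_conj] using
    norm_integral_Ioi_gaussianWave_mul_exp_stableExponent_sub_one_le (ℓ := ℓ)
      (c := (starRingEnd ℂ) c) (d := -(starRingEnd ℂ) d) hY ha hb (by simpa using hK)

/-- Since `Y < 2`, the Gaussian absorbs `h |u| ^ Y` at a cost `K` that is uniform in `h ≤ 1`. -/
theorem exists_norm_integral_gaussianWave_mul_exp_stableExponent_sub_one_le {σ : ℝ} (hσ : σ ≠ 0)
    (hY0 : 0 ≤ Y) (hY2 : Y < 2) (ℓ : ℕ) (c d : ℂ) :
    ∃ C : ℝ, ∀ a h : ℝ, 0 < a → 0 < h → h ≤ 1 →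
      ‖∫ u : ℝ, gaussianWave ℓ a (σ ^ 2 * h) u *
        (Complex.exp (h * stableExponent Y c d u) - 1)‖ ≤ C * (h * a ^ (-Y - ℓ - 1)) := by
  obtain ⟨K, hK0, hK⟩ := exists_mul_rpow_le_mul_rpow_add hY0 hY2 (B := ‖c‖ + ‖d‖) (by positivity)
    (show 0 < σ ^ 2 / 8 by positivity)
  refine ⟨2 * (Real.exp K * (‖c‖ + ‖d‖) * (Real.Gamma (ℓ + Y + 1) * 2 ^ (ℓ + Y + 1))),
    fun a h ha hh hh1 => ?_⟩
  have hnorm (w : ℂ) : ‖h * w‖ = h * ‖w‖ := by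
    rw [norm_mul, Complex.norm_of_nonneg hh.le]
  simp only [ofReal_mul_stableExponent]
  refine (norm_integral_gaussianWave_mul_exp_stableExponent_sub_one_le (K := K) hY0 hY2 ha
    (by positivity) fun r hr => ?_).trans (le_of_eq ?_)
  · rw [hnorm, hnorm, ← mul_add]
    have := mul_le_mul_of_nonneg_left (hK r hr) hh.le
    rw [Real.rpow_two] at this
    nlinarith [mul_le_mul_of_nonneg_right hh1 hK0]
  · rw [hnorm, hnorm, ← mul_add, Real.div_rpow two_pos.le ha.le,
      show -Y - ℓ - 1 = -(ℓ + Y + 1) by ring, Real.rpow_neg ha.le]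
    ring

end StablePerturbation

section SmallTime

variable {ε : ℝ → ℝ}

lemma eventually_pos_of_tendsto_div_sqrt
    (hε : Tendsto (fun h => ε h / √h) (𝓝[>] (0 : ℝ)) atTop) : ∀ᶠ h in 𝓝[>] (0 : ℝ), 0 < ε h := by
  filter_upwards [hε.eventually_gt_atTop 0, self_mem_nhdsWithin] with h hdiv hh
  exact (div_pos_iff_of_pos_right (Real.sqrt_pos.2 hh)).1 hdiv

lemma sqrt_isLittleO_of_tendsto_div_sqrt
    (hε : Tendsto (fun h => ε h / √h) (𝓝[>] (0 : ℝ)) atTop) : Real.sqrt =o[𝓝[>] (0 : ℝ)] ε := by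
  refine (isLittleO_iff_tendsto' ?_).2 ?_
  · filter_upwards [eventually_pos_of_tendsto_div_sqrt hε] with h hpos hzero
    exact absurd hzero hpos.ne'
  · exact (tendsto_inv_atTop_zero.comp hε).congr fun h => inv_div _ _

lemma id_isLittleO_sqrt_nhdsGT_zero : (id : ℝ → ℝ) =o[𝓝[>] (0 : ℝ)] Real.sqrt := by
  have hlim : Tendsto Real.sqrt (𝓝[>] (0 : ℝ)) (𝓝 0) :=
    (Real.continuous_sqrt.tendsto' 0 0 Real.sqrt_zero).mono_left nhdsWithin_le_nhds
  have hmul := ((isLittleO_one_iff ℝ).2 hlim).mul_isBigO (isBigO_refl Real.sqrt (𝓝[>] (0 : ℝ)))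
  simp only [one_mul] at hmul
  refine hmul.congr' ?_ EventuallyEq.rfl
  filter_upwards [self_mem_nhdsWithin] with h hh
  exact Real.mul_self_sqrt (le_of_lt hh)

lemma add_mul_isEquivalent_of_tendsto_div_sqrt
    (hε : Tendsto (fun h => ε h / √h) (𝓝[>] (0 : ℝ)) atTop) (γ : ℝ) :
    (fun h => ε h + γ * h) ~[𝓝[>] (0 : ℝ)] ε :=
  IsEquivalent.refl.add_isLittleO ((id_isLittleO_sqrt_nhdsGT_zero.trans
    (sqrt_isLittleO_of_tendsto_div_sqrt hε)).const_mul_left γ)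

lemma eventually_sq_mul_le_add_mul_sq
    (hε : Tendsto (fun h => ε h / √h) (𝓝[>] (0 : ℝ)) atTop) (γ σ : ℝ) :
    ∀ᶠ h in 𝓝[>] (0 : ℝ), σ ^ 2 * h ≤ (ε h + γ * h) ^ 2 := by
  have hlittle := ((sqrt_isLittleO_of_tendsto_div_sqrt hε).trans_isBigO
    (add_mul_isEquivalent_of_tendsto_div_sqrt hε γ).isBigO_symm).const_mul_left σ
  filter_upwards [hlittle.eventuallyLE, self_mem_nhdsWithin] with h hle hh
  calc σ ^ 2 * h = (σ * √h) ^ 2 := by rw [mul_pow, Real.sq_sqrt (le_of_lt hh)]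
    _ ≤ (ε h + γ * h) ^ 2 := sq_le_sq.2 hle

lemma isBigO_exp_neg_add_mul_sq_div (hε : ε =O[𝓝[>] (0 : ℝ)] (1 : ℝ → ℝ)) (γ σ : ℝ) :
    (fun h => Real.exp (-(ε h + γ * h) ^ 2 / (2 * (σ ^ 2 * h)))) =O[𝓝[>] (0 : ℝ)]
      fun h => Real.exp (-(ε h ^ 2) / (2 * σ ^ 2 * h)) := by
  have hid : (fun h : ℝ => h) =O[𝓝[>] (0 : ℝ)] (1 : ℝ → ℝ) :=
    (tendsto_id.mono_left nhdsWithin_le_nhds).isBigO_one ℝ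
  have hdiff := (hε.const_mul_left (-(γ / σ ^ 2))).sub (hid.const_mul_left (γ ^ 2 / (2 * σ ^ 2)))
  refine Real.isBigO_exp_comp_exp_comp.2 (((isBigO_one_iff ℝ).1 hdiff).mono_le ?_)
  filter_upwards [self_mem_nhdsWithin] with h hh
  refine le_trans (le_of_eq ?_) (le_abs_self _)
  have hh : h ≠ 0 := ne_of_gt hh
  rw [Pi.sub_apply]
  field_simp
  ring

variable {σ : ℝ}

lemma isBigO_integral_gaussianWave (hσ : σ ≠ 0) (hε : ε =O[𝓝[>] (0 : ℝ)] (1 : ℝ → ℝ))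
    (hεsqrt : Tendsto (fun h => ε h / √h) (𝓝[>] (0 : ℝ)) atTop) (γ : ℝ) (ℓ : ℕ) :
    (fun h => ∫ u : ℝ, gaussianWave ℓ (ε h + γ * h) (σ ^ 2 * h) u) =O[𝓝[>] (0 : ℝ)]
      fun h => h ^ (-(ℓ : ℝ) - 1 / 2) * ε h ^ ℓ * Real.exp (-(ε h ^ 2) / (2 * σ ^ 2 * h)) := by
  obtain ⟨C, hC⟩ := exists_norm_integral_gaussianWave_le ℓ
  have hequiv := add_mul_isEquivalent_of_tendsto_div_sqrt hεsqrt γ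
  refine (IsBigO.of_bound C ?_).trans ((((hequiv.isBigO.pow ℓ).const_mul_left
    (((σ ^ 2) ^ ℓ)⁻¹ * |σ|⁻¹)).mul (isBigO_refl (fun h : ℝ => h ^ (-(ℓ : ℝ) - 1 / 2)) _)).mul
      (isBigO_exp_neg_add_mul_sq_div hε γ σ) |>.congr_right fun h => by ring)
  filter_upwards [hequiv.eventually_pos (eventually_pos_of_tendsto_div_sqrt hεsqrt),
    eventually_sq_mul_le_add_mul_sq hεsqrt γ σ, self_mem_nhdsWithin] with h ha hb hh
  have hh : 0 < h := hh
  refine (hC _ _ ha.le (by positivity) hb).trans (le_of_eq ?_)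
  rw [Real.norm_of_nonneg (by positivity), Real.sqrt_mul (sq_nonneg σ), Real.sqrt_sq_eq_abs,
    Real.rpow_sub hh, Real.rpow_neg hh.le, Real.rpow_natCast, ← Real.sqrt_eq_rpow, div_pow,
    mul_pow (σ ^ 2)]
  field_simp

lemma isBigO_integral_gaussianWave_mul_exp_stableExponent_sub_one {Y : ℝ} (hσ : σ ≠ 0)
    (hY0 : 0 ≤ Y) (hY2 : Y < 2) (hεsqrt : Tendsto (fun h => ε h / √h) (𝓝[>] (0 : ℝ)) atTop)
    (γ : ℝ) (ℓ : ℕ) (c d : ℂ) :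
    (fun h => ∫ u : ℝ, gaussianWave ℓ (ε h + γ * h) (σ ^ 2 * h) u *
        (Complex.exp (h * stableExponent Y c d u) - 1)) =O[𝓝[>] (0 : ℝ)]
      fun h => h * ε h ^ (-Y - ℓ - 1) := by
  obtain ⟨C, hC⟩ :=
    exists_norm_integral_gaussianWave_mul_exp_stableExponent_sub_one_le hσ hY0 hY2 ℓ c d
  have hequiv := add_mul_isEquivalent_of_tendsto_div_sqrt hεsqrt γ
  have hε := eventually_pos_of_tendsto_div_sqrt hεsqrt
  have ha := hequiv.eventually_pos hε
  refine (IsBigO.of_bound C ?_).trans ((isBigO_refl (fun h : ℝ => h) _).mul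
    (hequiv.isTheta.rpow (ha.mono fun _ => le_of_lt) (hε.mono fun _ => le_of_lt)).isBigO)
  filter_upwards [ha, Ioc_mem_nhdsGT one_pos] with h hah hh
  refine (hC _ h hah hh.1 hh.2).trans (le_of_eq ?_)
  rw [Real.norm_of_nonneg (mul_nonneg hh.1.le (Real.rpow_nonneg hah.le _))]

end SmallTime

theorem oscillatory_integral_estimate_general {Y σ : ℝ} (hY0 : 0 ≤ Y) (hY2 : Y < 2) (hσ : σ ≠ 0)
    (γ : ℝ) (ℓ : ℕ) (c d : ℂ) {ε : ℝ → ℝ} (hε : ε =O[𝓝[>] (0 : ℝ)] (1 : ℝ → ℝ))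
    (hεsqrt : Tendsto (fun h => ε h / √h) (𝓝[>] (0 : ℝ)) atTop) :
    (∀ h : ℝ, 0 < h →
      Integrable (fun u : ℝ =>
        (u : ℂ) ^ ℓ * Complex.exp (Complex.I * u * (ε h + γ * h) - σ ^ 2 * u ^ 2 * h / 2
          + (|u| ^ Y * h : ℝ) * (c - d * Real.sign u)))) ∧
    ∃ R₁ R₂ : ℝ → ℂ,
      (∀ h : ℝ, 0 < h →
        (∫ u : ℝ, (u : ℂ) ^ ℓ * Complex.exp (Complex.I * u * (ε h + γ * h)
            - σ ^ 2 * u ^ 2 * h / 2 + (|u| ^ Y * h : ℝ) * (c - d * Real.sign u)))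
          = R₁ h + R₂ h) ∧
      R₁ =O[𝓝[>] (0 : ℝ)] (fun h => h * ε h ^ (-Y - (ℓ : ℝ) - 1)) ∧
      R₂ =O[𝓝[>] (0 : ℝ)]
        (fun h => h ^ (-(ℓ : ℝ) - 1 / 2) * ε h ^ ℓ *
          Real.exp (-(ε h ^ 2) / (2 * σ ^ 2 * h))) := by
  have hfactor (h u : ℝ) : (u : ℂ) ^ ℓ * Complex.exp (Complex.I * u * (ε h + γ * h)
      - σ ^ 2 * u ^ 2 * h / 2 + (|u| ^ Y * h : ℝ) * (c - d * Real.sign u)) =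
      gaussianWave ℓ (ε h + γ * h) (σ ^ 2 * h) u * Complex.exp (h * stableExponent Y c d u) := by
    rw [gaussianWave, mul_assoc ((u : ℂ) ^ ℓ), ← Complex.exp_add, stableExponent]
    push_cast
    ring_nf
  have hwave (h : ℝ) (hh : 0 < h) :
      Integrable fun u : ℝ => gaussianWave ℓ (ε h + γ * h) (σ ^ 2 * h) u :=
    integrable_gaussianWave (by positivity)
  have h_int (h : ℝ) (hh : 0 < h) : Integrable fun u : ℝ =>
      gaussianWave ℓ (ε h + γ * h) (σ ^ 2 * h) u * Complex.exp (h * stableExponent Y c d u) := by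
    simp only [ofReal_mul_stableExponent]
    exact integrable_gaussianWave_mul_exp_stableExponent hY0 hY2 (by positivity)
  simp only [hfactor]
  refine ⟨h_int, _, _, fun h hh => ?_,
    isBigO_integral_gaussianWave_mul_exp_stableExponent_sub_one hσ hY0 hY2 hεsqrt γ ℓ c d,
    isBigO_integral_gaussianWave hσ hε hεsqrt γ ℓ⟩
  simp only [mul_sub_one]
  rw [integral_sub (h_int h hh) (hwave h hh), sub_add_cancel]

/-- key estimate in Lemma C.2: asymptotics of the oscillatory integral
`I(ℓ) = ∫ u^ℓ exp(iu(ε ± γ₀h) − σ²u²h/2 + |u|^Y h (c₁ ∓ ic₂ sgn u)) du`. -/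
theorem oscillatory_integral_estimate
    (Y Cp Cm σ : ℝ)
    (hY1 : 1 < Y) (hY2 : Y < 2) (hCp : 0 < Cp) (hCm : 0 < Cm) (hσ : 0 < σ)
    (γ₀ : ℝ) (ℓ : ℕ)
    (c₁ c₂ : ℝ)
    (hc₁ : c₁ = (Cp + Cm) * Real.cos (π * Y / 2) * Real.Gamma (-Y))
    (hc₂ : c₂ = (Cm - Cp) * Real.sin (π * Y / 2) * Real.Gamma (-Y))
    -- the threshold `ε = ε(h)`
    (ε : ℝ → ℝ) (hεpos : ∀ h : ℝ, 0 < h → 0 < ε h)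
    (hε0 : Tendsto ε (𝓝[>] (0 : ℝ)) (𝓝 0))
    (hεsqrt : Tendsto (fun h => ε h / Real.sqrt h) (𝓝[>] (0 : ℝ)) atTop) :
    ∀ s : ℝ, s = 1 ∨ s = -1 →
      (∀ h : ℝ, 0 < h →
        Integrable (fun u : ℝ =>
          (u : ℂ) ^ ℓ * Complex.exp (Complex.I * u * (ε h + s * γ₀ * h)
            - σ ^ 2 * u ^ 2 * h / 2
            + (|u| ^ Y * h : ℝ) * (c₁ - s * Complex.I * c₂ * Real.sign u)))) ∧
      ∃ R₁ R₂ : ℝ → ℂ,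
        (∀ h : ℝ, 0 < h →
          (∫ u : ℝ, (u : ℂ) ^ ℓ * Complex.exp (Complex.I * u * (ε h + s * γ₀ * h)
              - σ ^ 2 * u ^ 2 * h / 2
              + (|u| ^ Y * h : ℝ) * (c₁ - s * Complex.I * c₂ * Real.sign u)))
            = R₁ h + R₂ h) ∧
        R₁ =O[𝓝[>] (0 : ℝ)] (fun h => h * ε h ^ (-Y - (ℓ : ℝ) - 1)) ∧
        R₂ =O[𝓝[>] (0 : ℝ)]
          (fun h => h ^ (-(ℓ : ℝ) - 1 / 2) * ε h ^ ℓ *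
            Real.exp (-(ε h ^ 2) / (2 * σ ^ 2 * h))) := by
  intro s _
  simpa only [Complex.ofReal_mul] using oscillatory_integral_estimate_general (by linarith) hY2
    hσ.ne' (s * γ₀) ℓ c₁ (s * Complex.I * c₂) (hε0.isBigO_one ℝ) hεsqrt

end
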